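/- Let A be a positive definite octonionic Hermitian 2×2 matrix and B any octonionic Hermitian 2×2 matrix. Then tr((A⁻¹·B)·(A⁻¹·B)) ≥ 0, where A⁻¹ := (1/det A)·adj(A). (The key inequality established in the proof of Lemma 15.2.) -/

import Mathlib

noncomputable section

open scoped Quaternion

/-- The octonions, realized as pairs of quaternions (Cayley–Dickson). -/
abbrev Oct : Type := ℍ[ℝ] × ℍ[ℝ]

/-- Octonionic multiplication: (x,y)·(w,z) = (xw − z̄y, zx + yw̄). -/
def omul (a b : Oct) : Oct :=
  (a.1 * b.1 - star b.2 * a.2, b.2 * a.1 + a.2 * star b.1)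

/-- Octonionic conjugation. -/
def oconj (a : Oct) : Oct := (star a.1, -a.2)

/-- Real part of an octonion. -/
def oRe (a : Oct) : ℝ := a.1.re

/-- Squared norm |q|² = Re(q·q̄). -/
def onSq (a : Oct) : ℝ := oRe (omul a (oconj a))

/-- Octonionic Hermitian 2×2 matrix: (α, β, q) represents [[α, q],[q̄, β]]. -/
abbrev Herm : Type := ℝ × ℝ × Oct

/-- Determinant of an octonionic Hermitian 2×2 matrix. -/
def detH (A : Herm) : ℝ := A.1 * A.2.1 - onSq A.2.2

/-- The quadratic form ξ ↦ Re(ξ*Aξ). -/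
def qform (A : Herm) (ξ : Oct × Oct) : ℝ :=
  A.1 * onSq ξ.1 + A.2.1 * onSq ξ.2 + 2 * oRe (omul (oconj ξ.1) (omul A.2.2 ξ.2))

/-- Positive definiteness. -/
def PosDefH (A : Herm) : Prop := ∀ ξ : Oct × Oct, ξ ≠ 0 → 0 < qform A ξ

/-- Nonnegative definiteness. -/
def NonnegDefH (A : Herm) : Prop := ∀ ξ : Oct × Oct, 0 ≤ qform A ξ

/-- 2×2 matrices with octonionic entries. -/
abbrev Omat : Type := Fin 2 → Fin 2 → Oct

/-- Product of 2×2 octonionic matrices. -/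
def matMul (X Y : Omat) : Omat := fun i j => ∑ k, omul (X i k) (Y k j)

/-- Embedding of ℝ into the octonions. -/
def oR (r : ℝ) : Oct := ((r : ℍ[ℝ]), 0)

/-- The 2×2 octonionic matrix [[α, q],[q̄, β]] attached to a Hermitian triple. -/
def hermToMat (A : Herm) : Omat := ![![oR A.1, A.2.2], ![oconj A.2.2, oR A.2.1]]

/-- The 2×2 identity matrix. -/
def idMat : Omat := ![![oR 1, 0], ![0, oR 1]]

/-- The adjugate adj(A) = (β, α, −q) of an octonionic Hermitian matrix A = (α, β, q). -/
def adjH (A : Herm) : Herm := (A.2.1, A.1, -A.2.2)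

/-- The real trace tr(X) = Re(X₁₁) + Re(X₂₂) of a 2×2 octonionic matrix. -/
def otr (X : Omat) : ℝ := oRe (X 0 0) + oRe (X 1 1)

/-- The inverse A⁻¹ = (1/det A)·adj(A) of an octonionic Hermitian matrix. -/
def invH (A : Herm) : Herm := (detH A)⁻¹ • adjH A

/- Write `X` for the octonionic product of the matrices of `C = A⁻¹` and `B`. Despite
nonassociativity the Cayley–Hamilton trace identity `tr(X²) = (tr X)² - 2 det C det B` holds: the
quartic terms in the off-diagonal entries enter only through real parts and through norms, which are
multiplicative. On the other hand, the quadratic polynomial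
`det(B + t adj C) = det B + t tr X + t² det C` takes a nonpositive value, at the `t` killing the
first diagonal entry. As `det C > 0`, its discriminant is therefore nonnegative, which is the
reversed Cauchy–Schwarz inequality `4 det C det B ≤ (tr X)²` for the Lorentzian form `det`. -/

/-- The Euclidean inner product `⟨p, q⟩ = Re(p·q̄)` of octonions, the polarization of `onSq`. -/
def oinner (p q : Oct) : ℝ := oRe (omul p (oconj q))

theorem oinner_self (q : Oct) : oinner q q = onSq q := rfl

theorem oRe_omul_oconj (p q : Oct) : oRe (omul p (oconj q)) = oinner p q := rfl

theorem quaternion_re_mul_comm {R : Type*} [CommRing R] (x y : ℍ[R]) : (x * y).re = (y * x).re := by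
  simp only [Quaternion.re_mul]
  ring

theorem oRe_omul_comm (x y : Oct) : oRe (omul x y) = oRe (omul y x) := by
  have re_star_mul_comm : (star y.2 * x.2).re = (star x.2 * y.2).re := by
    rw [← Quaternion.re_star (star y.2 * x.2), star_mul, star_star]
  simp only [oRe, omul, Quaternion.re_sub, quaternion_re_mul_comm x.1, re_star_mul_comm]

theorem oinner_eq_inner_add_inner (p q : Oct) :
    oinner p q = inner ℝ p.1 q.1 + inner ℝ p.2 q.2 := by
  simp [oinner, oRe, omul, oconj, Quaternion.inner_def, quaternion_re_mul_comm p.2]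

theorem oinner_comm (p q : Oct) : oinner p q = oinner q p := by
  simp only [oinner_eq_inner_add_inner, real_inner_comm]

theorem oinner_add_left (p q r : Oct) : oinner (p + q) r = oinner p r + oinner q r := by
  simp only [oinner_eq_inner_add_inner, Prod.fst_add, Prod.snd_add, inner_add_left]
  ring

theorem oinner_add_right (p q r : Oct) : oinner p (q + r) = oinner p q + oinner p r := by
  simp only [oinner_comm p, oinner_add_left]

theorem oinner_smul_left (t : ℝ) (p q : Oct) : oinner (t • p) q = t * oinner p q := by
  simp only [oinner_eq_inner_add_inner, Prod.smul_fst, Prod.smul_snd, real_inner_smul_left]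
  ring

theorem oinner_smul_right (t : ℝ) (p q : Oct) : oinner p (t • q) = t * oinner p q := by
  simp only [oinner_comm p, oinner_smul_left]

theorem oinner_neg_left (p q : Oct) : oinner (-p) q = -oinner p q := by
  simpa using oinner_smul_left (-1) p q

theorem oinner_oR_left (r : ℝ) (q : Oct) : oinner (oR r) q = r * oRe q := by
  simp [oinner, oR, oRe, omul, oconj]

theorem oRe_omul_oconj_left (p q : Oct) : oRe (omul (oconj p) q) = oinner p q := by
  rw [oRe_omul_comm, oRe_omul_oconj, oinner_comm]

theorem onSq_eq_normSq_add_normSq (q : Oct) :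
    onSq q = Quaternion.normSq q.1 + Quaternion.normSq q.2 := by
  rw [← oinner_self, oinner_eq_inner_add_inner, Quaternion.inner_self, Quaternion.inner_self]

theorem onSq_nonneg (q : Oct) : 0 ≤ onSq q := by
  rw [onSq_eq_normSq_add_normSq]
  exact add_nonneg Quaternion.normSq_nonneg Quaternion.normSq_nonneg

theorem onSq_oR (r : ℝ) : onSq (oR r) = r ^ 2 := by
  simp [onSq_eq_normSq_add_normSq, oR, Quaternion.normSq_coe]

theorem onSq_oconj (q : Oct) : onSq (oconj q) = onSq q := by
  simp [onSq_eq_normSq_add_normSq, oconj]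

theorem onSq_neg (q : Oct) : onSq (-q) = onSq q := by
  simp [onSq_eq_normSq_add_normSq]

theorem onSq_smul (t : ℝ) (q : Oct) : onSq (t • q) = t ^ 2 * onSq q := by
  simp only [← oinner_self, oinner_smul_left, oinner_smul_right]
  ring

theorem onSq_add (p q : Oct) : onSq (p + q) = onSq p + 2 * oinner p q + onSq q := by
  simp only [← oinner_self, oinner_add_left, oinner_add_right, oinner_comm q p]
  ring

theorem onSq_omul (x y : Oct) : onSq (omul x y) = onSq x * onSq y := by
  have cross_terms_cancel : (x.1 * y.1 * star (-(star y.2 * x.2))).re =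
      -(y.2 * x.1 * star (x.2 * star y.1)).re := by
    simp only [star_neg, star_mul, star_star, mul_neg, Quaternion.re_neg]
    rw [← mul_assoc, quaternion_re_mul_comm _ y.2]
    simp only [mul_assoc]
  simp only [onSq_eq_normSq_add_normSq, omul, sub_eq_add_neg, Quaternion.normSq_add,
    cross_terms_cancel, Quaternion.normSq_neg, Quaternion.normSq_star, map_mul]
  ring

theorem oRe_oR_add (r : ℝ) (q : Oct) : oRe (oR r + q) = r + oRe q := rfl

theorem oRe_omul_self (x : Oct) : oRe (omul x x) = 2 * oRe x ^ 2 - onSq x := by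
  rw [onSq_eq_normSq_add_normSq, Quaternion.normSq_def']
  simp only [oRe, omul, Quaternion.re_sub, Quaternion.re_mul, Quaternion.star_mul_self,
    Quaternion.re_coe]
  ring

theorem oRe_omul_self_oR_add (r : ℝ) (x : Oct) :
    oRe (omul (oR r + x) (oR r + x)) = r ^ 2 + 2 * r * oRe x + 2 * oRe x ^ 2 - onSq x := by
  rw [oRe_omul_self, oRe_oR_add, onSq_add, onSq_oR, oinner_oR_left]
  ring

theorem omul_oR (q : Oct) (r : ℝ) : omul q (oR r) = r • q := by
  ext <;> simp [omul, oR, mul_comm]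

theorem oR_omul (r : ℝ) (q : Oct) : omul (oR r) q = r • q := by
  ext <;> simp [omul, oR, mul_comm]

theorem matMul_hermToMat (C B : Herm) :
    matMul (hermToMat C) (hermToMat B) =
      ![![oR (C.1 * B.1) + omul C.2.2 (oconj B.2.2), C.1 • B.2.2 + B.2.1 • C.2.2],
        ![oconj (B.1 • C.2.2 + C.2.1 • B.2.2), omul (oconj C.2.2) B.2.2 + oR (C.2.1 * B.2.1)]] := by
  have smul_oR (r s : ℝ) : r • oR s = oR (r * s) := by ext <;> simp [oR]
  have oconj_smul_add (r s : ℝ) (p q : Oct) :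
      oconj (r • p + s • q) = r • oconj p + s • oconj q := by
    ext <;> simp [oconj, add_comm]
  funext i j
  fin_cases i <;> fin_cases j <;>
    simp [matMul, hermToMat, Fin.sum_univ_two, omul_oR, oR_omul, smul_oR, oconj_smul_add, mul_comm]

theorem otr_matMul_hermToMat (C B : Herm) :
    otr (matMul (hermToMat C) (hermToMat B)) =
      C.1 * B.1 + C.2.1 * B.2.1 + 2 * oinner C.2.2 B.2.2 := by
  simp only [matMul_hermToMat, otr, Matrix.cons_val_zero, Matrix.cons_val_one, add_comm _ (oR _),
    oRe_oR_add, oRe_omul_oconj_left, oRe_omul_oconj]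
  ring

theorem otr_matMul_self (X : Omat) :
    otr (matMul X X) =
      oRe (omul (X 0 0) (X 0 0)) + oRe (omul (X 1 1) (X 1 1)) +
        2 * oRe (omul (X 0 1) (X 1 0)) := by
  have oRe_add (p q : Oct) : oRe (p + q) = oRe p + oRe q := rfl
  simp only [otr, matMul, Fin.sum_univ_two, oRe_add, oRe_omul_comm (X 1 0)]
  ring

theorem otr_matMul_hermToMat_sq (C B : Herm) :
    otr (matMul (matMul (hermToMat C) (hermToMat B)) (matMul (hermToMat C) (hermToMat B))) =
      otr (matMul (hermToMat C) (hermToMat B)) ^ 2 - 2 * detH C * detH B := by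
  obtain ⟨a, b, p⟩ := C
  obtain ⟨c, d, q⟩ := B
  have first_diagonal : oRe (omul (oR (a * c) + omul p (oconj q)) (oR (a * c) + omul p (oconj q))) =
      (a * c) ^ 2 + 2 * (a * c) * oinner p q + 2 * oinner p q ^ 2 - onSq p * onSq q := by
    rw [oRe_omul_self_oR_add, oRe_omul_oconj, onSq_omul, onSq_oconj]
  have second_diagonal :
      oRe (omul (oR (b * d) + omul (oconj p) q) (oR (b * d) + omul (oconj p) q)) =
        (b * d) ^ 2 + 2 * (b * d) * oinner p q + 2 * oinner p q ^ 2 - onSq p * onSq q := by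
    rw [oRe_omul_self_oR_add, oRe_omul_oconj_left, onSq_omul, onSq_oconj]
  have off_diagonal : oRe (omul (a • q + d • p) (oconj (c • p + b • q))) =
      (a * c + b * d) * oinner p q + a * b * onSq q + c * d * onSq p := by
    simp only [oRe_omul_oconj, oinner_add_left, oinner_add_right, oinner_smul_left,
      oinner_smul_right, oinner_self, oinner_comm q p]
    ring
  rw [otr_matMul_self, otr_matMul_hermToMat, matMul_hermToMat]
  simp only [Matrix.cons_val_zero, Matrix.cons_val_one, add_comm _ (oR _), first_diagonal,
    second_diagonal, off_diagonal, detH]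
  ring

theorem detH_smul (t : ℝ) (A : Herm) : detH (t • A) = t ^ 2 * detH A := by
  simp only [detH, Prod.smul_fst, Prod.smul_snd, smul_eq_mul, onSq_smul]
  ring

theorem detH_adjH (A : Herm) : detH (adjH A) = detH A := by
  simp only [detH, adjH, onSq_neg, mul_comm]

theorem detH_add_smul_adjH (B C : Herm) (t : ℝ) :
    detH (B + t • adjH C) =
      detH B + t * otr (matMul (hermToMat C) (hermToMat B)) + t ^ 2 * detH C := by
  rw [otr_matMul_hermToMat]
  simp only [detH, adjH, Prod.fst_add, Prod.snd_add, Prod.smul_fst, Prod.smul_snd, smul_eq_mul,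
    onSq_add, onSq_smul, onSq_neg, oinner_comm B.2.2, oinner_smul_left, oinner_neg_left]
  ring

theorem detH_nonpos_of_fst_eq_zero {A : Herm} (hA : A.1 = 0) : detH A ≤ 0 := by
  simpa [detH, hA] using onSq_nonneg A.2.2

theorem four_mul_detH_mul_detH_le_otr_sq {C : Herm} (hC : 0 ≤ detH C) (B : Herm) :
    4 * detH C * detH B ≤ otr (matMul (hermToMat C) (hermToMat B)) ^ 2 := by
  obtain hC | hC := hC.eq_or_lt
  · rw [← hC, mul_zero, zero_mul]
    exact sq_nonneg _
  have adjH_fst_ne_zero : (adjH C).1 ≠ 0 := fun h ↦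
    (detH_nonpos_of_fst_eq_zero h).not_gt (by rwa [detH_adjH])
  have detH_nonpos : detH (B + (-B.1 / (adjH C).1) • adjH C) ≤ 0 :=
    detH_nonpos_of_fst_eq_zero (by simp [adjH_fst_ne_zero])
  rw [detH_add_smul_adjH] at detH_nonpos
  generalize otr (matMul (hermToMat C) (hermToMat B)) = s, -B.1 / (adjH C).1 = t at *
  calc 4 * detH C * detH B
      = s ^ 2 - (2 * detH C * t + s) ^ 2
          + 4 * detH C * (detH B + t * s + t ^ 2 * detH C) := by ring
    _ ≤ s ^ 2 := by
      linarith [sq_nonneg (2 * detH C * t + s),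
        mul_nonpos_of_nonneg_of_nonpos (by positivity : 0 ≤ 4 * detH C) detH_nonpos]

theorem otr_matMul_hermToMat_sq_nonneg {C : Herm} (hC : 0 ≤ detH C) (B : Herm) :
    0 ≤ otr (matMul (matMul (hermToMat C) (hermToMat B))
      (matMul (hermToMat C) (hermToMat B))) := by
  rw [otr_matMul_hermToMat_sq]
  linarith [four_mul_detH_mul_detH_le_otr_sq hC B,
    sq_nonneg (otr (matMul (hermToMat C) (hermToMat B)))]

theorem detH_invH (A : Herm) : detH (invH A) = (detH A)⁻¹ := by
  rw [invH, detH_smul, detH_adjH, sq]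
  simpa using mul_self_mul_inv (detH A)⁻¹

theorem PosDefH.fst_pos {A : Herm} (hA : PosDefH A) : 0 < A.1 := by
  have := hA (oR 1, 0) (by simp [oR])
  simpa [qform, onSq, oRe, omul, oconj, oR] using this

/- For `α > 0` and fixed `ξ₂`, the form is minimal where `ξ₁ = -α⁻¹ (q ξ₂)`; here `ξ₂ = α`. -/
theorem qform_neg_oR (A : Herm) : qform A (-A.2.2, oR A.1) = A.1 * detH A := by
  simp only [qform, detH, onSq_neg, onSq_oR, omul_oR, oRe_omul_oconj_left, oinner_neg_left,
    oinner_smul_right, oinner_self]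
  ring

theorem PosDefH.detH_pos {A : Herm} (hA : PosDefH A) : 0 < detH A := by
  have ne_zero : (-A.2.2, oR A.1) ≠ (0 : Oct × Oct) := fun h ↦
    hA.fst_pos.ne' (congrArg (fun ξ : Oct × Oct ↦ oRe ξ.2) h)
  have := hA _ ne_zero
  rw [qform_neg_oR] at this
  exact pos_of_mul_pos_right this hA.fst_pos.le

theorem trace_square_nonneg_general (A B : Herm) (hA : 0 < detH A) :
    0 ≤ otr (matMul (matMul (hermToMat (invH A)) (hermToMat B))
             (matMul (hermToMat (invH A)) (hermToMat B))) := by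
  have detH_invH_nonneg : 0 ≤ detH (invH A) := (detH_invH A).symm ▸ inv_nonneg.2 hA.le
  exact otr_matMul_hermToMat_sq_nonneg detH_invH_nonneg B

/-- The key inequality in the proof of Lemma 15.2: for A positive definite and B
octonionic Hermitian, tr((A⁻¹B)(A⁻¹B)) ≥ 0. -/
theorem trace_square_nonneg (A B : Herm) (hA : PosDefH A) :
    0 ≤ otr (matMul (matMul (hermToMat (invH A)) (hermToMat B))
             (matMul (hermToMat (invH A)) (hermToMat B))) :=
  trace_square_nonneg_general A B hA.detH_pos
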